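/- Let σ0 > 0 and β ∈ (0,1); let G be the cumulative distribution function of the centered Gaussian of variance 3σ0², with derivative G' = γ_{0,√3σ0}, T(B) := σ0·√(6β(log 2)B), and for each B ∈ ℕ let t_k := G^{−1}((k−1)·2^{−B}) be the B-bit thresholds. Then for every ε > 0 there exists B₀ such that for all B ≥ B₀, for every k with [t_k, t_{k+1}] ⊆ [−T(B), T(B)] and every c ∈ [t_k, t_{k+1}]: |G'(c)·(t_{k+1} − t_k)·2^B − 1| ≤ ε; i.e., G'(c) is asymptotically equal to 2^{−B}/τ_k uniformly over all such bins. -/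

import Mathlib

/-!
Write `g` for the density of the centered Gaussian of variance `3σ0²`, and `τ` for the width of a
bin contained in `[-T, T]`. Two bounds on the mass `∫ g = 2^{-B}` of the bin give the result.

* On `[-T, T]` the density is at least `g T = C · 2^{-βB}`, where `C` is its value at `0`; hence
  `τ ≤ C⁻¹ · 2^{-(1-β)B}` (`width_le`).
* If `c, u` lie in the bin, then `|c² - u²| ≤ 2Tτ`, so `g c` and `g u` differ by a factor at most
  `exp (Tτ / (3σ0²))` (`gaussPdf_le_exp_mul`). Integrating over `u` traps `g c · τ · 2^B` between
  `exp (-r)` and `exp r` with `r = Tτ / (3σ0²)`.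

As `T` grows like `√B` while `τ` decays geometrically (this is where `β < 1` enters), `r` is at
most a quantity `distortion σ0 β B` that depends on `B` only and tends to `0`
(`tendsto_distortion`); this gives the uniformity.
-/

open MeasureTheory

/-- Centered Gaussian pdf of standard deviation σ. -/
noncomputable def gaussPdf (σ t : ℝ) : ℝ :=
  (2 * Real.pi * σ ^ 2) ^ (-(1:ℝ) / 2) * Real.exp (-(t ^ 2) / (2 * σ ^ 2))

/-- The optimal compressor associated with γ_{0,σ0}: the cumulative distribution
function of the centered Gaussian of variance 3σ0². -/
noncomputable def compressorG (σ0 lam : ℝ) : ℝ :=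
  ∫ t in Set.Iic lam, gaussPdf (Real.sqrt 3 * σ0) t

/-- The transition value T(B) = σ0·√(6β(log 2)B). -/
noncomputable def transitionT (σ0 β : ℝ) (B : ℕ) : ℝ :=
  σ0 * Real.sqrt (6 * β * Real.log 2 * (B : ℝ))

/-- The value at `0` of the Gaussian density of standard deviation `√3 σ0`. -/
noncomputable def peak (σ0 : ℝ) : ℝ := (2 * Real.pi * (Real.sqrt 3 * σ0) ^ 2) ^ (-(1:ℝ) / 2)

/-- An upper bound for `T(B) τ / (3σ0²)`, which in turn bounds the oscillation of the logarithm of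
the density over a bin of width `τ` and mass `2^{-B}` inside `[-T(B), T(B)]`: the width `τ` is
replaced by its bound from `width_le`. -/
noncomputable def distortion (σ0 β : ℝ) (B : ℕ) : ℝ :=
  transitionT σ0 β B * ((peak σ0)⁻¹ * Real.exp (-((1 - β) * Real.log 2) * B)) / (3 * σ0 ^ 2)

lemma peak_pos {σ0 : ℝ} (h : 0 < σ0) : 0 < peak σ0 := by
  unfold peak; positivity

lemma gaussPdf_eq (σ0 x : ℝ) :
    gaussPdf (Real.sqrt 3 * σ0) x = peak σ0 * Real.exp (-(x ^ 2) / (6 * σ0 ^ 2)) := by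
  have h : 2 * (Real.sqrt 3 * σ0) ^ 2 = 6 * σ0 ^ 2 := by
    rw [mul_pow, Real.sq_sqrt (by norm_num)]; ring
  simp only [gaussPdf, peak, h]

lemma continuous_gaussPdf (σ0 : ℝ) : Continuous (gaussPdf (Real.sqrt 3 * σ0)) := by
  rw [funext (gaussPdf_eq σ0)]; fun_prop

lemma gaussPdf_pos {σ0 : ℝ} (h : 0 < σ0) (x : ℝ) : 0 < gaussPdf (Real.sqrt 3 * σ0) x := by
  rw [gaussPdf_eq]
  exact mul_pos (peak_pos h) (Real.exp_pos _)

lemma integrable_gaussPdf {σ0 : ℝ} (h : 0 < σ0) : Integrable (gaussPdf (Real.sqrt 3 * σ0)) := by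
  rw [funext (gaussPdf_eq σ0)]
  have hb : 0 < 1 / (6 * σ0 ^ 2) := by positivity
  refine ((integrable_exp_neg_mul_sq hb).const_mul (peak σ0)).congr (ae_of_all _ fun x => ?_)
  change peak σ0 * Real.exp (-(1 / (6 * σ0 ^ 2)) * x ^ 2)
    = peak σ0 * Real.exp (-(x ^ 2) / (6 * σ0 ^ 2))
  congr 2
  ring

lemma compressorG_sub {σ0 : ℝ} (h : 0 < σ0) (a b : ℝ) :
    compressorG σ0 b - compressorG σ0 a = ∫ u in a..b, gaussPdf (Real.sqrt 3 * σ0) u :=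
  intervalIntegral.integral_Iic_sub_Iic (integrable_gaussPdf h).integrableOn
    (integrable_gaussPdf h).integrableOn

/-- A Harnack-type comparison: on `[a, b] ⊆ [-T, T]` the logarithm of the density oscillates by at
most `T (b - a) / (3σ0²)`. -/
lemma gaussPdf_le_exp_mul {σ0 T a b c u : ℝ} (h : 0 < σ0)
    (hT : Set.Icc a b ⊆ Set.Icc (-T) T) (hc : c ∈ Set.Icc a b) (hu : u ∈ Set.Icc a b) :
    gaussPdf (Real.sqrt 3 * σ0) c
      ≤ Real.exp (T * (b - a) / (3 * σ0 ^ 2)) * gaussPdf (Real.sqrt 3 * σ0) u := by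
  rw [gaussPdf_eq, gaussPdf_eq, mul_left_comm, ← Real.exp_add]
  refine mul_le_mul_of_nonneg_left (Real.exp_le_exp.2 ?_) (peak_pos h).le
  have key : u ^ 2 - c ^ 2 ≤ 2 * (T * (b - a)) := by
    obtain ⟨hc1, hc2⟩ := hT hc
    obtain ⟨hu1, hu2⟩ := hT hu
    have h1 : |u - c| ≤ b - a := abs_le.2 ⟨by linarith [hu.1, hc.2], by linarith [hu.2, hc.1]⟩
    have h2 : |u + c| ≤ 2 * T := abs_le.2 ⟨by linarith, by linarith⟩
    calc u ^ 2 - c ^ 2 = (u + c) * (u - c) := by ring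
      _ ≤ |u + c| * |u - c| := by rw [← abs_mul]; exact le_abs_self _
      _ ≤ 2 * T * (b - a) :=
        mul_le_mul h2 h1 (abs_nonneg _) ((abs_nonneg _).trans h2)
      _ = 2 * (T * (b - a)) := by ring
  have e : T * (b - a) / (3 * σ0 ^ 2) = 2 * (T * (b - a)) / (6 * σ0 ^ 2) := by
    field_simp; ring
  rw [e, ← add_div]
  gcongr
  linarith

/-- A bin of mass `2^{-B}` inside `[-T(B), T(B)]` has width at most `C⁻¹ · 2^{-(1-β)B}`, where `C`
is the peak of the density. -/
lemma width_le {σ0 β a b : ℝ} {B : ℕ} (h : 0 < σ0) (hβ : 0 < β) (hab : a ≤ b)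
    (hT : Set.Icc a b ⊆ Set.Icc (-(transitionT σ0 β B)) (transitionT σ0 β B))
    (hm : ∫ u in a..b, gaussPdf (Real.sqrt 3 * σ0) u = Real.exp (-(Real.log 2 * B))) :
    b - a ≤ (peak σ0)⁻¹ * Real.exp (-((1 - β) * Real.log 2) * B) := by
  have hlog : 0 < Real.log 2 := Real.log_pos (by norm_num)
  have hTsq : transitionT σ0 β B ^ 2 = 6 * σ0 ^ 2 * (β * Real.log 2 * B) := by
    rw [transitionT, mul_pow, Real.sq_sqrt (by positivity)]; ring
  have hlow : ∀ u ∈ Set.Icc a b,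
      peak σ0 * Real.exp (-(β * Real.log 2 * B)) ≤ gaussPdf (Real.sqrt 3 * σ0) u := by
    intro u hu
    rw [gaussPdf_eq]
    refine mul_le_mul_of_nonneg_left (Real.exp_le_exp.2 ?_) (peak_pos h).le
    have : u ^ 2 ≤ transitionT σ0 β B ^ 2 := sq_le_sq' (hT hu).1 (hT hu).2
    rw [le_div_iff₀ (by positivity)]
    nlinarith
  have hint := intervalIntegral.integral_mono_on (μ := volume) hab
    intervalIntegrable_const ((continuous_gaussPdf σ0).intervalIntegrable a b) hlow
  rw [intervalIntegral.integral_const, smul_eq_mul, hm] at hint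
  have hp := peak_pos h
  have hsplit : Real.exp (-(Real.log 2 * B))
      = Real.exp (-((1 - β) * Real.log 2) * B) * Real.exp (-(β * Real.log 2 * B)) := by
    rw [← Real.exp_add]; congr 1; ring
  rw [hsplit, ← mul_assoc] at hint
  have := le_of_mul_le_mul_right hint (Real.exp_pos _)
  rw [inv_mul_eq_div, le_div_iff₀ hp]
  exact this

lemma tendsto_distortion {σ0 β : ℝ} (hβ : β ∈ Set.Ioo (0:ℝ) 1) :
    Filter.Tendsto (distortion σ0 β) Filter.atTop (nhds 0) := by
  have hlog : 0 < Real.log 2 := Real.log_pos (by norm_num)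
  have ha : 0 < (1 - β) * Real.log 2 := mul_pos (by linarith [hβ.2]) hlog
  have h1 := ((tendsto_rpow_mul_exp_neg_mul_atTop_nhds_zero (1 / 2) _ ha).comp
    tendsto_natCast_atTop_atTop).const_mul
      (σ0 * Real.sqrt (6 * β * Real.log 2) * (peak σ0)⁻¹ / (3 * σ0 ^ 2))
  rw [mul_zero] at h1
  refine h1.congr fun B => ?_
  have hβ0 := hβ.1
  simp only [Function.comp, distortion, transitionT, ← Real.sqrt_eq_rpow]
  rw [Real.sqrt_mul (by positivity : 0 ≤ 6 * β * Real.log 2)]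
  ring

theorem qpdf_asymptotics_inside_transition
    (σ0 β : ℝ) (hσ0 : 0 < σ0) (hβ : β ∈ Set.Ioo (0:ℝ) 1)
    (t : ℕ → ℕ → ℝ)
    (ht : ∀ B k : ℕ, 2 ≤ k → k ≤ 2 ^ B →
      compressorG σ0 (t B k) = ((k : ℝ) - 1) * 2 ^ (-(B : ℝ))) :
    ∀ ε : ℝ, 0 < ε → ∃ B₀ : ℕ, ∀ B : ℕ, B₀ ≤ B → ∀ k : ℕ, 2 ≤ k → k + 1 ≤ 2 ^ B →
      Set.Icc (t B k) (t B (k + 1))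
          ⊆ Set.Icc (-(transitionT σ0 β B)) (transitionT σ0 β B) →
      ∀ c ∈ Set.Icc (t B k) (t B (k + 1)),
        |gaussPdf (Real.sqrt 3 * σ0) c * (t B (k + 1) - t B k) * 2 ^ B - 1| ≤ ε := by
  intro ε hε
  have hd : Filter.Tendsto (distortion σ0 β) Filter.atTop (nhds 0) := tendsto_distortion hβ
  have hup : Filter.Tendsto (fun B => Real.exp (distortion σ0 β B)) Filter.atTop (nhds 1) := by
    simpa [Function.comp_def] using (Real.continuous_exp.tendsto 0).comp hd
  have hdn : Filter.Tendsto (fun B => Real.exp (-distortion σ0 β B)) Filter.atTop (nhds 1) := by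
    simpa [Function.comp_def] using (Real.continuous_exp.tendsto (-0)).comp hd.neg
  obtain ⟨B₀, hB₀⟩ := Filter.eventually_atTop.1
    ((hup.eventually (ge_mem_nhds (by linarith : (1:ℝ) < 1 + ε))).and
      (hdn.eventually (le_mem_nhds (by linarith : 1 - ε < (1:ℝ)))))
  refine ⟨B₀, fun B hB k hk hk' hsub c hc => ?_⟩
  obtain ⟨hexp_up, hexp_dn⟩ := hB₀ B hB
  have hpow : (2:ℝ) ^ (-(B:ℝ)) = Real.exp (-(Real.log 2 * B)) := by
    rw [Real.rpow_def_of_pos (by norm_num)]; congr 1; ring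
  have hpow' : Real.exp (-(Real.log 2 * B)) * 2 ^ B = 1 := by
    rw [← hpow, Real.rpow_neg (by norm_num), Real.rpow_natCast]
    exact inv_mul_cancel₀ (by positivity)
  have hm : ∫ u in (t B k)..(t B (k + 1)), gaussPdf (Real.sqrt 3 * σ0) u
      = Real.exp (-(Real.log 2 * B)) := by
    rw [← compressorG_sub hσ0, ht B k hk (by omega), ht B (k + 1) (by omega) hk', ← hpow]
    push_cast; ring
  have hab : t B k ≤ t B (k + 1) := hc.1.trans hc.2
  set a := t B k
  set b := t B (k + 1)
  set g := gaussPdf (Real.sqrt 3 * σ0)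
  have hT0 : 0 ≤ transitionT σ0 β B := mul_nonneg hσ0.le (Real.sqrt_nonneg _)
  have hr : transitionT σ0 β B * (b - a) / (3 * σ0 ^ 2) ≤ distortion σ0 β B := by
    unfold distortion
    gcongr
    exact width_le hσ0 hβ.1 hab hsub hm
  have hcmp : ∀ x ∈ Set.Icc a b, ∀ y ∈ Set.Icc a b, g x ≤ Real.exp (distortion σ0 β B) * g y :=
    fun x hx y hy => (gaussPdf_le_exp_mul hσ0 hsub hx hy).trans
      (mul_le_mul_of_nonneg_right (Real.exp_le_exp.2 hr) (gaussPdf_pos hσ0 y).le)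
  have hgi : IntervalIntegrable g volume a b := (continuous_gaussPdf σ0).intervalIntegrable a b
  have hI1 := intervalIntegral.integral_mono_on (μ := volume) hab
    intervalIntegrable_const (hgi.const_mul _) (fun u hu => hcmp c hc u hu)
  have hI2 := intervalIntegral.integral_mono_on (μ := volume) hab
    hgi intervalIntegrable_const (fun u hu => hcmp u hu c hc)
  rw [intervalIntegral.integral_const, smul_eq_mul, intervalIntegral.integral_const_mul, hm] at hI1
  rw [intervalIntegral.integral_const, smul_eq_mul, hm] at hI2
  have h2B : (0:ℝ) ≤ 2 ^ B := by positivity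
  have hle : g c * (b - a) * 2 ^ B ≤ Real.exp (distortion σ0 β B) := by
    have := mul_le_mul_of_nonneg_right hI1 h2B
    rw [mul_assoc (Real.exp _), hpow', mul_one] at this
    linarith
  have hge : Real.exp (-distortion σ0 β B) ≤ g c * (b - a) * 2 ^ B := by
    have := mul_le_mul_of_nonneg_right hI2 h2B
    rw [hpow'] at this
    rw [Real.exp_neg, inv_le_iff_one_le_mul₀' (Real.exp_pos _)]
    linarith
  exact abs_le.2 ⟨by linarith, by linarith⟩
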